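/- Let b : [0,L] → ℝ be continuous with (1/L)∫₀ᴸ b(y) dy = 0, and let λ₀ := √a. Then the infimum defining the minimal speed can be restricted to a bounded interval: inf_{λ > 0} μ_b(λ)/λ = inf_{0 < λ ≤ λ₀} μ_b(λ)/λ. -/

import Mathlib

/-!
With `B = ∫ bψ² / ∫ ψ²` and `D = ∫ ψ'² / ∫ ψ² ≥ 0`, the Rayleigh quotient of a trial function `ψ`
at `λ`, divided by `λ`, is `λ + a / λ + B - D / λ`. Both `λ + a / λ` and `-D / λ` are nondecreasing
on `[√a, ∞)`, hence so is the supremum `μ_b(λ) / λ` over all `ψ`, and the values `λ > √a` do not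
contribute to the infimum.
-/

open Real Set MeasureTheory intervalIntegral

/-- The principal Neumann eigenvalue `μ_b(λ)` of
`ψ'' + (λ² + λ b(y) + a) ψ = μ ψ` on `(0, L)`, defined through the Rayleigh
quotient variational characterization
`μ_b(λ) = sup { ∫₀ᴸ (−ψ'² + (λ² + λ b + a) ψ²) / ∫₀ᴸ ψ² : ψ ∈ H¹((0,L)), ψ ≠ 0 }`. -/
noncomputable def mu (L a : ℝ) (b : ℝ → ℝ) (l : ℝ) : ℝ :=
  sSup { m : ℝ | ∃ ψ : ℝ → ℝ, ContDiffOn ℝ 1 ψ (Icc 0 L) ∧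
    (∃ y ∈ Icc (0 : ℝ) L, ψ y ≠ 0) ∧
    m = (∫ y in (0 : ℝ)..L, (-(deriv ψ y) ^ 2 + (l ^ 2 + l * b y + a) * (ψ y) ^ 2)) /
        (∫ y in (0 : ℝ)..L, (ψ y) ^ 2) }

/-- The KPP minimal front speed `c*(b) = inf_{λ>0} μ_b(λ)/λ`. -/
noncomputable def cstar (L a : ℝ) (b : ℝ → ℝ) : ℝ :=
  sInf { v : ℝ | ∃ l : ℝ, 0 < l ∧ v = mu L a b l / l }

theorem sInf_image_Ioi_eq_sInf_image_Ioc_of_monotoneOn {α β : Type*} [LinearOrder α]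
    [ConditionallyCompleteLinearOrder β] {f : α → β} {x c : α} (hxc : x < c)
    (hf : MonotoneOn f (Ici c)) : sInf (f '' Ioi x) = sInf (f '' Ioc x c) := by
  apply csInf_eq_csInf_of_forall_exists_le
  · rintro _ ⟨t, ht, rfl⟩
    rcases le_total t c with htc | hct
    · exact ⟨f t, mem_image_of_mem f ⟨ht, htc⟩, le_rfl⟩
    · exact ⟨f c, mem_image_of_mem f ⟨hxc, le_rfl⟩, hf self_mem_Ici hct hct⟩
  · exact fun v hv => ⟨v, image_mono Ioc_subset_Ioi_self hv, le_rfl⟩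

theorem monotoneOn_add_div_Ici_sqrt {a : ℝ} (ha : 0 < a) :
    MonotoneOn (fun t => t + a / t) (Ici √a) := by
  intro s hs t ht hst
  have hs₀ : 0 < s := (sqrt_pos.2 ha).trans_le hs
  have ht₀ : 0 < t := hs₀.trans_le hst
  have ha_le : a ≤ s * t := by
    simpa only [mul_self_sqrt ha.le] using mul_le_mul hs ht (sqrt_nonneg a) hs₀.le
  have hdiff : t + a / t - (s + a / s) = (t - s) * (s * t - a) / (s * t) := by
    field_simp
    ring
  have : 0 ≤ (t - s) * (s * t - a) / (s * t) :=
    div_nonneg (mul_nonneg (sub_nonneg.2 hst) (sub_nonneg.2 ha_le)) (mul_pos hs₀ ht₀).le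
  exact sub_nonneg.1 (hdiff ▸ this)

theorem intervalIntegrable_deriv_pow_of_contDiffOn_Icc {f : ℝ → ℝ} {x y : ℝ} (hxy : x < y)
    (hf : ContDiffOn ℝ 1 f (Icc x y)) (n : ℕ) :
    IntervalIntegrable (fun t => deriv f t ^ n) volume x y := by
  have hcont : ContinuousOn (fun t => derivWithin f (Icc x y) t ^ n) (Icc x y) :=
    (hf.continuousOn_derivWithin (uniqueDiffOn_Icc hxy) le_rfl).pow n
  refine (hcont.intervalIntegrable_of_Icc hxy.le).congr_uIoo fun t ht => ?_
  rw [uIoo_of_le hxy.le] at ht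
  exact congrArg (· ^ n) (derivWithin_of_mem_nhds (Icc_mem_nhds ht.1 ht.2))

/-- The trial functions of the variational principle for `mu`: the functions of class `C¹` on
`[0, L]` that do not vanish identically there. -/
def IsTrialFunction (L : ℝ) (ψ : ℝ → ℝ) : Prop :=
  ContDiffOn ℝ 1 ψ (Icc 0 L) ∧ ∃ y ∈ Icc 0 L, ψ y ≠ 0

/-- The Rayleigh quotient of `ψ'' + (l² + l b + a) ψ` on `[0, L]`, whose supremum over the trial
functions is `mu L a b l`. -/
noncomputable def rayleighQuotient (L a : ℝ) (b : ℝ → ℝ) (l : ℝ) (ψ : ℝ → ℝ) : ℝ :=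
  (∫ y in 0..L, (-(deriv ψ y) ^ 2 + (l ^ 2 + l * b y + a) * ψ y ^ 2)) / ∫ y in 0..L, ψ y ^ 2

/-- The mean of the shear `b` with respect to the density `ψ²` on `[0, L]`, the
coefficient of `l` in `rayleighQuotient L a b l ψ`. -/
noncomputable def weightedMean (L : ℝ) (b ψ : ℝ → ℝ) : ℝ :=
  (∫ y in 0..L, b y * ψ y ^ 2) / ∫ y in 0..L, ψ y ^ 2

/-- The normalized Dirichlet energy of `ψ` on `[0, L]`, the part of `-rayleighQuotient L a b l ψ`
that does not involve `l`, `a` or `b`. -/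
noncomputable def dirichletQuotient (L : ℝ) (ψ : ℝ → ℝ) : ℝ :=
  (∫ y in 0..L, deriv ψ y ^ 2) / ∫ y in 0..L, ψ y ^ 2

section

variable {L a l M : ℝ} {b ψ : ℝ → ℝ}

theorem mu_eq_sSup_image_rayleighQuotient :
    mu L a b l = sSup (rayleighQuotient L a b l '' {ψ | IsTrialFunction L ψ}) := by
  simp only [mu, rayleighQuotient, IsTrialFunction, image, mem_ofPred_eq, and_assoc,
    eq_comm (b := _ / _)]

theorem isTrialFunction_one (hL : 0 ≤ L) : IsTrialFunction L 1 :=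
  ⟨contDiffOn_const, 0, left_mem_Icc.2 hL, one_ne_zero⟩

namespace IsTrialFunction

theorem continuousOn_sq (hψ : IsTrialFunction L ψ) :
    ContinuousOn (fun y => ψ y ^ 2) (Icc 0 L) :=
  hψ.1.continuousOn.pow 2

theorem intervalIntegrable_sq (hψ : IsTrialFunction L ψ) (hL : 0 ≤ L) :
    IntervalIntegrable (fun y => ψ y ^ 2) volume 0 L :=
  hψ.continuousOn_sq.intervalIntegrable_of_Icc hL

theorem intervalIntegrable_mul_sq (hψ : IsTrialFunction L ψ) (hL : 0 ≤ L)
    (hb : IntervalIntegrable b volume 0 L) :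
    IntervalIntegrable (fun y => b y * ψ y ^ 2) volume 0 L :=
  hb.mul_continuousOn (by simpa only [uIcc_of_le hL] using hψ.continuousOn_sq)

theorem integral_sq_pos (hψ : IsTrialFunction L ψ) (hL : 0 < L) :
    0 < ∫ y in 0..L, ψ y ^ 2 := by
  obtain ⟨y, hy, hψy⟩ := hψ.2
  exact integral_pos hL hψ.continuousOn_sq (fun _ _ => sq_nonneg _) ⟨y, hy, sq_pos_of_ne_zero hψy⟩

theorem weightedMean_le (hψ : IsTrialFunction L ψ) (hL : 0 < L)
    (hb : IntervalIntegrable b volume 0 L) (hM : ∀ y ∈ Icc 0 L, b y ≤ M) :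
    weightedMean L b ψ ≤ M := by
  rw [weightedMean, div_le_iff₀ (hψ.integral_sq_pos hL), ← intervalIntegral.integral_const_mul]
  exact integral_mono_on hL.le (hψ.intervalIntegrable_mul_sq hL.le hb)
    ((hψ.intervalIntegrable_sq hL.le).const_mul M)
    fun y hy => mul_le_mul_of_nonneg_right (hM y hy) (sq_nonneg _)

theorem rayleighQuotient_eq (hψ : IsTrialFunction L ψ) (hL : 0 < L)
    (hb : IntervalIntegrable b volume 0 L) :
    rayleighQuotient L a b l ψ =
      l ^ 2 + a + l * weightedMean L b ψ - dirichletQuotient L ψ := by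
  have hψ_sq := (hψ.intervalIntegrable_sq hL.le).const_mul (l ^ 2 + a)
  have hbψ_sq := (hψ.intervalIntegrable_mul_sq hL.le hb).const_mul l
  have hdψ_sq := intervalIntegrable_deriv_pow_of_contDiffOn_Icc hL hψ.1 2
  have hnum : ∫ y in 0..L, (-(deriv ψ y) ^ 2 + (l ^ 2 + l * b y + a) * ψ y ^ 2) =
      (l ^ 2 + a) * (∫ y in 0..L, ψ y ^ 2) + l * (∫ y in 0..L, b y * ψ y ^ 2) -
        ∫ y in 0..L, deriv ψ y ^ 2 := by
    rw [← intervalIntegral.integral_const_mul, ← intervalIntegral.integral_const_mul,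
      ← intervalIntegral.integral_add hψ_sq hbψ_sq,
      ← intervalIntegral.integral_sub (hψ_sq.add hbψ_sq) hdψ_sq]
    congr 1 with y
    ring
  have hpos := hψ.integral_sq_pos hL
  rw [rayleighQuotient, weightedMean, dirichletQuotient, hnum]
  field_simp

end IsTrialFunction

theorem dirichletQuotient_nonneg (hL : 0 ≤ L) : 0 ≤ dirichletQuotient L ψ :=
  div_nonneg (integral_nonneg hL fun _ _ => sq_nonneg _)
    (integral_nonneg hL fun _ _ => sq_nonneg _)

theorem bddAbove_image_rayleighQuotient (hL : 0 < L) (hb : IntervalIntegrable b volume 0 L)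
    (hb_bdd : BddAbove (b '' Icc 0 L)) (hl : 0 ≤ l) :
    BddAbove (rayleighQuotient L a b l '' {ψ | IsTrialFunction L ψ}) := by
  obtain ⟨M, hM⟩ := hb_bdd
  refine ⟨l ^ 2 + a + l * M, forall_mem_image.2 fun ψ hψ => ?_⟩
  have hmean : l * weightedMean L b ψ ≤ l * M :=
    mul_le_mul_of_nonneg_left (hψ.weightedMean_le hL hb (forall_mem_image.1 hM)) hl
  rw [hψ.rayleighQuotient_eq hL hb]
  linarith [dirichletQuotient_nonneg (ψ := ψ) hL.le]

theorem monotoneOn_rayleighQuotient_div (hL : 0 < L) (ha : 0 < a)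
    (hb : IntervalIntegrable b volume 0 L) (hψ : IsTrialFunction L ψ) :
    MonotoneOn (fun l => rayleighQuotient L a b l ψ / l) (Ici √a) := by
  have hpos : ∀ l ∈ Ici √a, 0 < l := fun l hl => (sqrt_pos.2 ha).trans_le hl
  have hsplit : ∀ l ∈ Ici √a, rayleighQuotient L a b l ψ / l =
      l + a / l + weightedMean L b ψ - dirichletQuotient L ψ / l := fun l hl => by
    have := (hpos l hl).ne'
    rw [hψ.rayleighQuotient_eq hL hb]
    field_simp
  intro s hs l hl hsl
  have hgrowth : s + a / s ≤ l + a / l := monotoneOn_add_div_Ici_sqrt ha hs hl hsl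
  have henergy : dirichletQuotient L ψ / l ≤ dirichletQuotient L ψ / s :=
    div_le_div_of_nonneg_left (dirichletQuotient_nonneg hL.le) (hpos s hs) hsl
  simp only [hsplit s hs, hsplit l hl]
  linarith

theorem monotoneOn_mu_div (hL : 0 < L) (ha : 0 < a) (hb : IntervalIntegrable b volume 0 L)
    (hb_bdd : BddAbove (b '' Icc 0 L)) : MonotoneOn (fun l => mu L a b l / l) (Ici √a) := by
  intro s hs l hl hsl
  have hs₀ : 0 < s := (sqrt_pos.2 ha).trans_le hs
  have hl₀ : 0 < l := hs₀.trans_le hsl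
  have hle_mu : ∀ ψ, IsTrialFunction L ψ → rayleighQuotient L a b l ψ ≤ mu L a b l := fun ψ hψ =>
    mu_eq_sSup_image_rayleighQuotient ▸
      le_csSup (bddAbove_image_rayleighQuotient hL hb hb_bdd hl₀.le) (mem_image_of_mem _ hψ)
  change mu L a b s / s ≤ mu L a b l / l
  rw [div_le_iff₀ hs₀, mu_eq_sSup_image_rayleighQuotient (l := s)]
  refine csSup_le (Nonempty.image _ ⟨1, isTrialFunction_one hL.le⟩)
    (forall_mem_image.2 fun ψ hψ => ?_)
  rw [← div_le_iff₀ hs₀]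
  calc rayleighQuotient L a b s ψ / s
      ≤ rayleighQuotient L a b l ψ / l := monotoneOn_rayleighQuotient_div hL ha hb hψ hs hl hsl
    _ ≤ mu L a b l / l := div_le_div_of_nonneg_right (hle_mu ψ hψ) hl₀.le

end

theorem stmt0_general {L a : ℝ} (hL : 0 < L) (ha : 0 < a) {b : ℝ → ℝ}
    (hb : IntervalIntegrable b volume 0 L) (hb_bdd : BddAbove (b '' Icc 0 L)) :
    sInf { v : ℝ | ∃ l : ℝ, 0 < l ∧ v = mu L a b l / l } =
      sInf { v : ℝ | ∃ l : ℝ, 0 < l ∧ l ≤ √a ∧ v = mu L a b l / l } := by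
  simpa only [image, mem_Ioi, mem_Ioc, and_assoc, eq_comm (b := _ / _)] using
    sInf_image_Ioi_eq_sInf_image_Ioc_of_monotoneOn (sqrt_pos.2 ha)
      (monotoneOn_mu_div hL ha hb hb_bdd)

/-- For continuous mean-zero `b` on `[0,L]`, the infimum defining the
KPP minimal speed can be restricted to `0 < λ ≤ λ₀ := √a`. -/
theorem stmt0 (L a : ℝ) (hL : 0 < L) (ha : 0 < a) (b : ℝ → ℝ)
    (hb : ContinuousOn b (Icc 0 L))
    (hmean : (1 / L) * ∫ y in (0 : ℝ)..L, b y = 0) :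
    sInf { v : ℝ | ∃ l : ℝ, 0 < l ∧ v = mu L a b l / l } =
      sInf { v : ℝ | ∃ l : ℝ, 0 < l ∧ l ≤ Real.sqrt a ∧ v = mu L a b l / l } :=
  stmt0_general hL ha (hb.intervalIntegrable_of_Icc hL.le) (isCompact_Icc.bddAbove_image hb)
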